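/- For any set 𝔓 of sequential laws that are locally absolutely continuous with respect to 𝚪, a nonnegative adapted process {M_t} is a nonnegative supermartingale for every law in 𝔓 if and only if it is a nonnegative supermartingale for every law in the closed fork-convex hull cl-f-conv(𝔓). -/

import Mathlib

open MeasureTheory ProbabilityTheory Filter Finset Matrix
open scoped Classical

noncomputable section

namespace SeqTest

/-- `ℝ^d`. -/
abbrev RV (d : ℕ) := Fin d → ℝ

/-- The sequence space `Ω = (ℝ^d)^ℕ`. -/
abbrev Seq (d : ℕ) := ℕ → RV d

variable (d : ℕ)


/-- The first `t` coordinates of a sequence. -/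
def prefixMap (t : ℕ) : Seq d → (Fin t → RV d) := fun ω s => ω s

/-- The law of the first `t` coordinates under a sequential law `μ`. -/
def prefixLaw (μ : Measure (Seq d)) (t : ℕ) : Measure (Fin t → RV d) :=
  μ.map (prefixMap d t)

/-- The natural filtration of the coordinate process: `ℱ t = σ(X_0, …, X_{t-1})`. -/
def F : Filtration ℕ (inferInstance : MeasurableSpace (Seq d)) where
  seq t := ⨆ s ∈ Finset.range t, MeasurableSpace.comap (fun ω : Seq d => ω s) inferInstance
  mono' := by
    intro i j hij
    exact biSup_mono fun s hs => Finset.mem_range.mpr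
      (lt_of_lt_of_le (Finset.mem_range.mp hs) hij)
  le' := by
    intro t
    refine iSup₂_le fun s _ => ?_
    exact measurable_iff_comap_le.mp (measurable_pi_apply s)

/-- Local absolute continuity of sequential laws: every prefix law of `μ` is
absolutely continuous w.r.t. the corresponding prefix law of `Γ`. -/
def LocAC (μ Γ : Measure (Seq d)) : Prop := ∀ t, prefixLaw d μ t ≪ prefixLaw d Γ t

/-- The density (likelihood-ratio) process `Z_t^μ = d(μ|_t)/d(Γ|_t)` evaluated along the path. -/
def Z (μ Γ : Measure (Seq d)) (t : ℕ) (ω : Seq d) : ℝ :=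
  ((prefixLaw d μ t).rnDeriv (prefixLaw d Γ t) (prefixMap d t ω)).toReal

/-- The standard Gaussian measure on `ℝ^d`. -/
def stdGaussian : Measure (RV d) := Measure.pi fun _ => gaussianReal 0 1

/-- `Γ` is the law of an i.i.d. sequence of standard Gaussians: characterized through its
finite-dimensional rectangle probabilities. -/
def IsGamma (Γ : Measure (Seq d)) : Prop :=
  IsProbabilityMeasure Γ ∧
    ∀ (t : ℕ) (A : Fin t → Set (RV d)), (∀ s, MeasurableSet (A s)) →
      prefixLaw d Γ t (Set.univ.pi A) = ∏ s, stdGaussian d (A s)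

/-- `M` is a nonnegative supermartingale for the sequential law `μ`
(w.r.t. the natural filtration). -/
def IsNSM (μ : Measure (Seq d)) (M : ℕ → Seq d → ℝ) : Prop :=
  (∀ t ω, 0 ≤ M t ω) ∧ Supermartingale M (F d) μ

/-- `M` is a nonnegative martingale for the sequential law `μ`. -/
def IsNM (μ : Measure (Seq d)) (M : ℕ → Seq d → ℝ) : Prop :=
  (∀ t ω, 0 ≤ M t ω) ∧ Martingale M (F d) μ


/-- `R` is the `(s,h)`-fork-convex combination of `P` with `Q` (relative to the
reference law `Γ`), described through its density process. -/
def IsFCC (Γ P Q : Measure (Seq d)) (s : ℕ) (h : Seq d → ℝ) (R : Measure (Seq d)) : Prop :=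
  IsProbabilityMeasure P ∧ IsProbabilityMeasure Q ∧ LocAC d P Γ ∧ LocAC d Q Γ ∧
  Measurable[F d s] h ∧ (∀ ω, h ω ∈ Set.Icc (0 : ℝ) 1) ∧
  Γ {ω | h ω < 1 ∧ Z d Q Γ s ω = 0} = 0 ∧
  IsProbabilityMeasure R ∧ LocAC d R Γ ∧
  ∀ t : ℕ, (fun ω => Z d R Γ t ω) =ᵐ[Γ]
    (fun ω => if t ≤ s then Z d P Γ t ω
      else h ω * Z d P Γ t ω + (1 - h ω) * Z d Q Γ t ω * (Z d P Γ s ω / Z d Q Γ s ω))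

/-- A set of sequential laws is fork-convex if it is closed under fork-convex combinations. -/
def IsForkConvex (Γ : Measure (Seq d)) (S : Set (Measure (Seq d))) : Prop :=
  ∀ P ∈ S, ∀ Q ∈ S, ∀ (s : ℕ) (h : Seq d → ℝ) (R : Measure (Seq d)),
    IsFCC d Γ P Q s h R → R ∈ S

/-- The fork-convex hull: the smallest fork-convex set containing `𝔓`. -/
def fconv (Γ : Measure (Seq d)) (𝔓 : Set (Measure (Seq d))) : Set (Measure (Seq d)) :=
  ⋂₀ {S | 𝔓 ⊆ S ∧ IsForkConvex d Γ S}

/-- Convergence of sequential laws: the density processes converge in `L¹(Γ)` at every fixed time. -/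
def TendstoLocL1 (Γ : Measure (Seq d)) (Pn : ℕ → Measure (Seq d)) (P : Measure (Seq d)) : Prop :=
  ∀ t, Tendsto (fun n => ∫ ω, |Z d (Pn n) Γ t ω - Z d P Γ t ω| ∂Γ) atTop (nhds 0)

/-- The closed fork-convex hull: the closure of the fork-convex hull under local `L¹(Γ)`
convergence of density processes. -/
def clfconv (Γ : Measure (Seq d)) (𝔓 : Set (Measure (Seq d))) : Set (Measure (Seq d)) :=
  {P | IsProbabilityMeasure P ∧ LocAC d P Γ ∧
    ∃ Pn : ℕ → Measure (Seq d), (∀ n, Pn n ∈ fconv d Γ 𝔓) ∧ TendstoLocL1 d Γ Pn P}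

/-- `μ` is the law of an i.i.d. sequence with marginal `P`. -/
def IsIIDLaw (μ : Measure (Seq d)) (P : Measure (RV d)) : Prop :=
  IsProbabilityMeasure μ ∧
    ∀ (t : ℕ) (A : Fin t → Set (RV d)), (∀ s, MeasurableSet (A s)) →
      prefixLaw d μ t (Set.univ.pi A) = ∏ s, P (A s)

/-- `μ` is the law of an independent sequence with marginals `Ps 0, Ps 1, …`. -/
def IsProductLaw (μ : Measure (Seq d)) (Ps : ℕ → Measure (RV d)) : Prop :=
  IsProbabilityMeasure μ ∧
    ∀ (t : ℕ) (A : Fin t → Set (RV d)), (∀ s, MeasurableSet (A s)) →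
      prefixLaw d μ t (Set.univ.pi A) = ∏ s : Fin t, Ps s (A s)

/-- The set of i.i.d. sequential laws with marginals in `PP`. -/
def iidLaws (PP : Set (Measure (RV d))) : Set (Measure (Seq d)) :=
  {μ | ∃ P ∈ PP, IsIIDLaw d μ P}

/-- The set of independent-product sequential laws with all marginals in `PP`. -/
def productLaws (PP : Set (Measure (RV d))) : Set (Measure (Seq d)) :=
  {μ | ∃ Ps : ℕ → Measure (RV d), (∀ t, Ps t ∈ PP) ∧ IsProductLaw d μ Ps}




/-- The density of the `d`-dimensional Gaussian with mean `m` and covariance matrix `S`. -/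
def gaussDensityFn (m : RV d) (S : Matrix (Fin d) (Fin d) ℝ) (x : RV d) : ℝ :=
  (2 * Real.pi) ^ (-(d : ℝ) / 2) * S.det ^ (-(1 : ℝ) / 2) *
    Real.exp (-(1 / 2) * ((x - m) ⬝ᵥ (S⁻¹ *ᵥ (x - m))))

/-- A finite mixture of nondegenerate Gaussian densities. -/
def IsGaussianMixture (g : RV d → ℝ) : Prop :=
  ∃ (k : ℕ) (α : Fin k → ℝ) (ms : Fin k → RV d) (Ss : Fin k → Matrix (Fin d) (Fin d) ℝ),
    (∀ i, 0 ≤ α i) ∧ (∑ i, α i = 1) ∧ (∀ i, (Ss i).PosDef) ∧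
    g = fun x => ∑ i, α i * gaussDensityFn d (ms i) (Ss i) x

/-- A log-concave nonnegative function on `ℝ^d`. -/
def IsLogConcaveFn (p : RV d → ℝ) : Prop :=
  (∀ x, 0 ≤ p x) ∧
    ∀ (x y : RV d) (l : ℝ), 0 ≤ l → l ≤ 1 →
      p x ^ l * p y ^ (1 - l) ≤ p (l • x + (1 - l) • y)

/-- A log-concave probability density on `ℝ^d`. -/
def IsLogConcaveDensity (p : RV d → ℝ) : Prop :=
  Measurable p ∧ IsLogConcaveFn d p ∧ ∫ x, p x = 1

/-- The set `𝓛` of laws on `ℝ^d` with a log-concave Lebesgue density. -/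
def logConcaveLaws : Set (Measure (RV d)) :=
  {P | IsProbabilityMeasure P ∧ ∃ p : RV d → ℝ, Measurable p ∧ IsLogConcaveFn d p ∧
    P = volume.withDensity fun x => ENNReal.ofReal (p x)}

/-- The set `𝒢` of nondegenerate Gaussian laws on `ℝ^d`. -/
def gaussianLaws : Set (Measure (RV d)) :=
  {P | ∃ (m : RV d) (S : Matrix (Fin d) (Fin d) ℝ), S.PosDef ∧
    P = volume.withDensity fun x => ENNReal.ofReal (gaussDensityFn d m S x)}

/-- An estimator sequence: a measurable family of (strictly positive) predictable
probability density estimates. -/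
def IsEstimatorSeq (E : (t : ℕ) → (Fin t → RV d) → RV d → ℝ) : Prop :=
  (∀ t, Measurable fun q : (Fin t → RV d) × RV d => E t q.1 q.2) ∧
  (∀ t h x, 0 < E t h x) ∧ (∀ t h, ∫ x, E t h x = 1)

/-- The universal likelihood ratio (ULR) process. Time `t` corresponds to having observed
the `t` samples `ω 0, …, ω (t-1)`. -/
def ULR (E : (t : ℕ) → (Fin t → RV d) → RV d → ℝ) (t : ℕ) (ω : Seq d) : ℝ :=
  if t ≤ d then 1 else
    (∏ j ∈ Finset.Ico d t, E j (fun i : Fin j => ω i) (ω j)) /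
      ⨆ p : {p : RV d → ℝ // IsLogConcaveDensity d p}, ∏ j ∈ Finset.Ico d t, p.1 (ω j)

/-- The prediction (cumulative log-loss) regret of the estimator sequence `E` relative to
the density of `P`. -/
def regret (P : Measure (RV d)) (E : (t : ℕ) → (Fin t → RV d) → RV d → ℝ)
    (t : ℕ) (ω : Seq d) : ℝ :=
  ∑ j ∈ Finset.range t,
    (Real.log ((P.rnDeriv volume (ω j)).toReal) - Real.log (E j (fun i : Fin j => ω i) (ω j)))

/-- The Hellinger distance between two laws on `ℝ^d` (via their Lebesgue densities). -/
def hellinger (P Q : Measure (RV d)) : ℝ :=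
  Real.sqrt ((1 / 2) *
    ∫ x, (Real.sqrt ((P.rnDeriv volume x).toReal) - Real.sqrt ((Q.rnDeriv volume x).toReal)) ^ 2)

/-- The Hellinger distance from `P` to the class of log-concave laws. -/
def dHLC (P : Measure (RV d)) : ℝ :=
  sInf {r | ∃ L ∈ logConcaveLaws d, r = hellinger d P L}

/-- The Kullback–Leibler divergence. -/
def klDivR {α : Type*} [MeasurableSpace α] (P Q : Measure α) : EReal :=
  if P ≪ Q ∧ Integrable (fun x => Real.log ((P.rnDeriv Q x).toReal)) P
  then ((∫ x, Real.log ((P.rnDeriv Q x).toReal) ∂P : ℝ) : EReal) else ⊤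

/-- Membership in `𝒟₁`. -/
def MemD1 (P : Measure (RV d)) : Prop :=
  IsProbabilityMeasure P ∧ P ≪ volume ∧
  Integrable (fun x => max 0 (Real.log ((P.rnDeriv volume x).toReal))) P ∧
  Integrable (fun x => Real.sqrt (∑ i, (x i) ^ 2)) P

/-- The log-likelihood gap `σ_t(P)` between the true density and the log-concave maximum
likelihood. -/
def sigmaT (P : Measure (RV d)) (t : ℕ) (ω : Seq d) : ℝ :=
  (∑ j ∈ Finset.range t, Real.log ((P.rnDeriv volume (ω j)).toReal)) -
    ⨆ p : {p : RV d → ℝ // IsLogConcaveDensity d p},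
      ∑ j ∈ Finset.range t, Real.log (p.1 (ω j))

/-- The mean vector of `P`. -/
def meanVec (P : Measure (RV d)) : RV d := fun i => ∫ x, x i ∂P

/-- `Δ_P = min_{‖v‖=1} E_P |⟨v, X − E_P X⟩|`. -/
def DeltaP (P : Measure (RV d)) : ℝ :=
  sInf {r | ∃ v : RV d, (∑ i, (v i) ^ 2) = 1 ∧
    r = ∫ x, |∑ i, v i * (x i - meanVec d P i)| ∂P}

/-- The class `𝒟_{Box,Lip,B}`: laws with a `1`-Lipschitz density supported on `[-1,1]^d`
taking values in `[1/B, B]` there. -/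
def DBoxLip (B : ℝ) : Set (Measure (RV d)) :=
  {P | IsProbabilityMeasure P ∧ ∃ p : RV d → ℝ, Measurable p ∧
    P = volume.withDensity (fun x => ENNReal.ofReal (p x)) ∧
    (∀ x, ¬ (∀ i, |x i| ≤ 1) → p x = 0) ∧
    (∀ x, (∀ i, |x i| ≤ 1) → 1 / B ≤ p x ∧ p x ≤ B) ∧
    (∀ x y, (∀ i, |x i| ≤ 1) → (∀ i, |y i| ≤ 1) →
      |p x - p y| ≤ Real.sqrt (∑ i, (x i - y i) ^ 2))}

variable {d}

lemma measurable_prefixMap (t : ℕ) : Measurable (prefixMap d t) :=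
  measurable_pi_lambda _ fun s => measurable_pi_apply (s : ℕ)

/-- The natural filtration at time `t` is generated by the prefix of length `t`. -/
lemma F_eq_comap_prefixMap (t : ℕ) :
    (F d) t = MeasurableSpace.comap (prefixMap d t) inferInstance := by
  refine le_antisymm (iSup₂_le fun s hs => ?_) (measurable_iff_comap_le.mp ?_)
  · rw [← measurable_iff_comap_le]
    exact (measurable_pi_apply (⟨s, Finset.mem_range.mp hs⟩ : Fin t)).comp
      (comap_measurable (prefixMap d t))
  · refine @measurable_pi_lambda _ _ _ ((F d) t) _ _ fun s => measurable_iff_comap_le.mpr ?_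
    exact le_iSup₂_of_le (f := fun (s : ℕ) (_ : s ∈ Finset.range t) =>
      MeasurableSpace.comap (fun ω : Seq d => ω s) inferInstance) (s : ℕ)
      (Finset.mem_range.mpr s.2) le_rfl

lemma F_zero : (F d) 0 = ⊥ := by
  rw [F_eq_comap_prefixMap, eq_bot_iff, ← measurable_iff_comap_le]
  have : prefixMap d 0 = fun _ => Fin.elim0 := funext fun _ => Subsingleton.elim _ _
  rw [this]
  exact measurable_const

lemma measurable_Z (μ Γ : Measure (Seq d)) (t : ℕ) : Measurable[(F d) t] (Z d μ Γ t) := by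
  rw [F_eq_comap_prefixMap]
  exact (Measure.measurable_rnDeriv _ _).ennreal_toReal.comp (comap_measurable _)

lemma Z_nonneg (μ Γ : Measure (Seq d)) (t : ℕ) (ω : Seq d) : 0 ≤ Z d μ Γ t ω :=
  ENNReal.toReal_nonneg

lemma integrable_Z (μ Γ : Measure (Seq d)) [IsProbabilityMeasure μ] (t : ℕ) :
    Integrable (Z d μ Γ t) Γ := by
  have : IsProbabilityMeasure (prefixLaw d μ t) :=
    Measure.isProbabilityMeasure_map (measurable_prefixMap t).aemeasurable
  exact Measure.integrable_toReal_rnDeriv.comp_measurable (measurable_prefixMap t)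

/-- Change of measure on `ℱ t` through the density process. -/
lemma lintegral_eq_lintegral_mul_Z {μ Γ : Measure (Seq d)} [IsProbabilityMeasure μ]
    [IsProbabilityMeasure Γ] (hμ : LocAC d μ Γ) {t : ℕ} {f : Seq d → ENNReal}
    (hf : Measurable[(F d) t] f) :
    ∫⁻ ω, f ω ∂μ = ∫⁻ ω, f ω * ENNReal.ofReal (Z d μ Γ t ω) ∂Γ := by
  have hμt : IsProbabilityMeasure (prefixLaw d μ t) :=
    Measure.isProbabilityMeasure_map (measurable_prefixMap t).aemeasurable
  have hΓt : IsProbabilityMeasure (prefixLaw d Γ t) :=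
    Measure.isProbabilityMeasure_map (measurable_prefixMap t).aemeasurable
  rw [F_eq_comap_prefixMap] at hf
  obtain ⟨g, hg, rfl⟩ := hf.exists_eq_measurable_comp
  have hr := Measure.measurable_rnDeriv (prefixLaw d μ t) (prefixLaw d Γ t)
  calc ∫⁻ ω, g (prefixMap d t ω) ∂μ = ∫⁻ x, g x ∂(prefixLaw d μ t) :=
        (lintegral_map hg (measurable_prefixMap t)).symm
    _ = ∫⁻ x, (prefixLaw d μ t).rnDeriv (prefixLaw d Γ t) x * g x ∂(prefixLaw d Γ t) :=
        (lintegral_rnDeriv_mul (hμ t) hg.aemeasurable).symm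
    _ = ∫⁻ x, g x * ENNReal.ofReal
          ((prefixLaw d μ t).rnDeriv (prefixLaw d Γ t) x).toReal ∂(prefixLaw d Γ t) := by
        refine lintegral_congr_ae ?_
        filter_upwards [Measure.rnDeriv_ne_top (prefixLaw d μ t) (prefixLaw d Γ t)] with x hx
        rw [ENNReal.ofReal_toReal hx, mul_comm]
    _ = _ := lintegral_map (hg.mul hr.ennreal_toReal.ennreal_ofReal) (measurable_prefixMap t)

/-- A bounded `ℱ t`-measurable function has close expectations under two laws whose densities at
time `t` are close in `L¹(Γ)`. -/
lemma lintegral_le_lintegral_add_integral_abs_Z_sub {μ ν Γ : Measure (Seq d)}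
    [IsProbabilityMeasure μ] [IsProbabilityMeasure ν] [IsProbabilityMeasure Γ]
    (hμ : LocAC d μ Γ) (hν : LocAC d ν Γ) {t : ℕ} {f : Seq d → ENNReal}
    (hf : Measurable[(F d) t] f) {K : ENNReal} (hfK : ∀ ω, f ω ≤ K) :
    ∫⁻ ω, f ω ∂μ ≤ ∫⁻ ω, f ω ∂ν +
      K * ENNReal.ofReal (∫ ω, |Z d μ Γ t ω - Z d ν Γ t ω| ∂Γ) := by
  have hm : ∀ ρ : Measure (Seq d), Measurable (Z d ρ Γ t) := fun ρ =>
    (measurable_Z ρ Γ t).mono ((F d).le t) le_rfl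
  have hf0 : Measurable f := hf.mono ((F d).le t) le_rfl
  rw [lintegral_eq_lintegral_mul_Z hμ hf, lintegral_eq_lintegral_mul_Z hν hf,
    ofReal_integral_eq_lintegral_ofReal (f := fun ω => |Z d μ Γ t ω - Z d ν Γ t ω|)
      ((integrable_Z μ Γ t).sub (integrable_Z ν Γ t)).abs
      (Eventually.of_forall fun _ => abs_nonneg _),
    ← lintegral_const_mul _ (by fun_prop), ← lintegral_add_left (by fun_prop)]
  refine lintegral_mono fun ω => ?_
  calc f ω * ENNReal.ofReal (Z d μ Γ t ω)
      ≤ f ω * ENNReal.ofReal (Z d ν Γ t ω + |Z d μ Γ t ω - Z d ν Γ t ω|) := by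
        gcongr
        linarith [le_abs_self (Z d μ Γ t ω - Z d ν Γ t ω)]
    _ ≤ f ω * ENNReal.ofReal (Z d ν Γ t ω) +
          K * ENNReal.ofReal |Z d μ Γ t ω - Z d ν Γ t ω| := by
        rw [ENNReal.ofReal_add (Z_nonneg _ _ _ _) (abs_nonneg _), mul_add]
        gcongr
        exact hfK ω

/-- The supermartingale inequality in `[0,∞]`-valued form, tested against a nonnegative
`ℱ t`-measurable function. -/
lemma IsNSM.lintegral_mul_succ_le {μ : Measure (Seq d)} [IsProbabilityMeasure μ]
    {M : ℕ → Seq d → ℝ} (hM : IsNSM d μ M) {t : ℕ} {g : Seq d → ENNReal}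
    (hg : Measurable[(F d) t] g) :
    ∫⁻ ω, g ω * ENNReal.ofReal (M (t + 1) ω) ∂μ ≤ ∫⁻ ω, g ω * ENNReal.ofReal (M t ω) ∂μ := by
  have hm : ∀ s, Measurable (fun ω => ENNReal.ofReal (M s ω)) := fun s =>
    ((hM.2.1 s).measurable.mono ((F d).le s) le_rfl).ennreal_ofReal
  have hg0 : Measurable g := hg.mono ((F d).le t) le_rfl
  have key : ∀ s, ∫⁻ ω, g ω * ENNReal.ofReal (M s ω) ∂μ =
      ∫⁻ ω, g ω ∂((μ.withDensity fun ω => ENNReal.ofReal (M s ω)).trim ((F d).le t)) := fun s => by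
    rw [lintegral_trim _ hg, lintegral_withDensity_eq_lintegral_mul _ (hm s) hg0]
    simp only [Pi.mul_apply, mul_comm]
  rw [key, key]
  refine lintegral_mono' (Measure.le_iff.mpr fun A hA => ?_) le_rfl
  have hA0 := (F d).le t A hA
  rw [trim_measurableSet_eq _ hA, trim_measurableSet_eq _ hA, withDensity_apply _ hA0,
    withDensity_apply _ hA0,
    ← ofReal_integral_eq_lintegral_ofReal (hM.2.integrable _).integrableOn
      (Eventually.of_forall (hM.1 _)),
    ← ofReal_integral_eq_lintegral_ofReal (hM.2.integrable _).integrableOn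
      (Eventually.of_forall (hM.1 _))]
  exact ENNReal.ofReal_le_ofReal (hM.2.setIntegral_le t.le_succ hA)

/-- An adapted nonnegative process satisfying the one-step supermartingale inequality in
`[0,∞]`-valued form is a nonnegative supermartingale; integrability is automatic because the
initial value is deterministic. -/
lemma isNSM_of_setLIntegral_succ_le {μ : Measure (Seq d)} [IsProbabilityMeasure μ]
    {M : ℕ → Seq d → ℝ} (h0 : ∀ t ω, 0 ≤ M t ω) (hM : StronglyAdapted (F d) M)
    (h : ∀ t A, MeasurableSet[(F d) t] A →
      ∫⁻ ω in A, ENNReal.ofReal (M (t + 1) ω) ∂μ ≤ ∫⁻ ω in A, ENNReal.ofReal (M t ω) ∂μ) :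
    IsNSM d μ M := by
  have hm : ∀ t, StronglyMeasurable (M t) := fun t => (hM t).mono ((F d).le t)
  have hint : ∀ t, Integrable (M t) μ := by
    intro t
    induction t with
    | zero =>
      have h1 := hM 0
      rw [F_zero] at h1
      obtain ⟨c, hc⟩ := stronglyMeasurable_bot_iff.mp h1
      rw [hc]
      exact integrable_const c
    | succ t ih =>
      refine ⟨(hm _).aestronglyMeasurable, ?_⟩
      rw [hasFiniteIntegral_iff_ofReal (Eventually.of_forall (h0 _))]
      refine lt_of_le_of_lt (by simpa using h t Set.univ MeasurableSet.univ) ?_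
      exact (hasFiniteIntegral_iff_ofReal (Eventually.of_forall (h0 _))).mp ih.2
  refine ⟨h0, supermartingale_of_setIntegral_succ_le hM hint fun t A hA => ?_⟩
  have := h t A hA
  rwa [← ofReal_integral_eq_lintegral_ofReal (hint _).integrableOn (Eventually.of_forall (h0 _)),
    ← ofReal_integral_eq_lintegral_ofReal (hint _).integrableOn (Eventually.of_forall (h0 _)),
    ENNReal.ofReal_le_ofReal_iff (integral_nonneg (h0 _))] at this

/-- The density-process form of the supermartingale inequality. -/
lemma IsNSM.lintegral_mul_Z_succ_le {μ Γ : Measure (Seq d)} [IsProbabilityMeasure μ]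
    [IsProbabilityMeasure Γ] (hμ : LocAC d μ Γ) {M : ℕ → Seq d → ℝ} (hM : IsNSM d μ M) {t : ℕ}
    {g : Seq d → ENNReal} (hg : Measurable[(F d) t] g) :
    ∫⁻ ω, g ω * ENNReal.ofReal (M (t + 1) ω) * ENNReal.ofReal (Z d μ Γ (t + 1) ω) ∂Γ ≤
      ∫⁻ ω, g ω * ENNReal.ofReal (M t ω) * ENNReal.ofReal (Z d μ Γ t ω) ∂Γ := by
  have key : ∀ u, t ≤ u → ∫⁻ ω, g ω * ENNReal.ofReal (M u ω) ∂μ =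
      ∫⁻ ω, g ω * ENNReal.ofReal (M u ω) * ENNReal.ofReal (Z d μ Γ u ω) ∂Γ := fun u htu =>
    lintegral_eq_lintegral_mul_Z hμ
      ((hg.mono ((F d).mono htu) le_rfl).mul (hM.2.1 u).measurable.ennreal_ofReal)
  rw [← key _ t.le_succ, ← key _ le_rfl]
  exact hM.lintegral_mul_succ_le hg

/-- After the fork time, the density process of a fork-convex combination. -/
lemma IsFCC.ofReal_Z_ae_eq {Γ P Q R : Measure (Seq d)} {s : ℕ} {h : Seq d → ℝ}
    (hR : IsFCC d Γ P Q s h R) {t : ℕ} (hst : s ≤ t) :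
    ∀ᵐ ω ∂Γ, ENNReal.ofReal (Z d R Γ t ω) =
      ENNReal.ofReal (h ω) * ENNReal.ofReal (Z d P Γ t ω) +
        ENNReal.ofReal ((1 - h ω) * (Z d P Γ s ω / Z d Q Γ s ω)) *
          ENNReal.ofReal (Z d Q Γ t ω) := by
  obtain ⟨-, -, -, -, -, hI, hnull, -, -, hZ⟩ := hR
  have hnull' : ∀ᵐ ω ∂Γ, ¬(h ω < 1 ∧ Z d Q Γ s ω = 0) := by
    rw [ae_iff]
    simpa using hnull
  filter_upwards [hZ t, hnull'] with ω hω hn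
  have hh := hI ω
  have hP := Z_nonneg P Γ
  have hQ := Z_nonneg Q Γ
  have hc : 0 ≤ (1 - h ω) * (Z d P Γ s ω / Z d Q Γ s ω) :=
    mul_nonneg (sub_nonneg.mpr hh.2) (div_nonneg (hP _ _) (hQ _ _))
  rw [← ENNReal.ofReal_mul hh.1, ← ENNReal.ofReal_mul hc,
    ← ENNReal.ofReal_add (mul_nonneg hh.1 (hP _ _)) (mul_nonneg hc (hQ _ _)), hω]
  congr 1
  split_ifs with hts
  · obtain rfl : t = s := le_antisymm hts hst
    by_cases hq : Z d Q Γ t ω = 0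
    · have h1 : h ω = 1 := le_antisymm hh.2 (not_lt.mp fun hlt => hn ⟨hlt, hq⟩)
      simp [h1]
    · field_simp
      ring
  · ring

/-- The supermartingale property is inherited by fork-convex combinations. -/
lemma IsFCC.isNSM {Γ P Q R : Measure (Seq d)} [IsProbabilityMeasure Γ] {s : ℕ} {h : Seq d → ℝ}
    (hR : IsFCC d Γ P Q s h R) {M : ℕ → Seq d → ℝ} (hMP : IsNSM d P M) (hMQ : IsNSM d Q M) :
    IsNSM d R M := by
  have hfork := fun {t : ℕ} (hst : s ≤ t) => hR.ofReal_Z_ae_eq hst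
  obtain ⟨hP, hQ, hPΓ, hQΓ, hh, -, -, hRprob, hRΓ, hZ⟩ := hR
  refine isNSM_of_setLIntegral_succ_le hMP.1 hMP.2.1 fun t A hA => ?_
  have hg : Measurable[(F d) t] (A.indicator fun _ => (1 : ENNReal)) :=
    measurable_const.indicator hA
  have hmM : ∀ u, Measurable[(F d) u] fun ω => ENNReal.ofReal (M u ω) := fun u =>
    (hMP.2.1 u).measurable.ennreal_ofReal
  have key : ∀ u, t ≤ u → ∫⁻ ω in A, ENNReal.ofReal (M u ω) ∂(R) =
      ∫⁻ ω, A.indicator (fun _ => 1) ω * ENNReal.ofReal (M u ω) *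
        ENNReal.ofReal (Z d R Γ u ω) ∂Γ := fun u htu => by
    refine Eq.trans ?_ (lintegral_eq_lintegral_mul_Z hRΓ
      ((hg.mono ((F d).mono htu) le_rfl).mul (hmM u)))
    rw [← lintegral_indicator ((F d).le t A hA)]
    refine lintegral_congr fun ω => ?_
    by_cases hω : ω ∈ A <;> simp [hω]
  rw [key _ t.le_succ, key _ le_rfl]
  by_cases hst : s ≤ t
  · have hh' := hh.mono ((F d).mono hst) le_rfl
    have hgP := hg.mul hh'.ennreal_ofReal
    have hratio : Measurable[(F d) t] fun ω => (1 - h ω) * (Z d P Γ s ω / Z d Q Γ s ω) :=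
      (measurable_const.sub hh').mul
        (((measurable_Z P Γ s).mono ((F d).mono hst) le_rfl).div
          ((measurable_Z Q Γ s).mono ((F d).mono hst) le_rfl))
    have hgQ := hg.mul hratio.ennreal_ofReal
    have split : ∀ u, t ≤ u →
        ∫⁻ ω, A.indicator (fun _ => 1) ω * ENNReal.ofReal (M u ω) *
          ENNReal.ofReal (Z d R Γ u ω) ∂Γ =
        ∫⁻ ω, A.indicator (fun _ => 1) ω * ENNReal.ofReal (h ω) * ENNReal.ofReal (M u ω) *
          ENNReal.ofReal (Z d P Γ u ω) ∂Γ +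
        ∫⁻ ω, A.indicator (fun _ => 1) ω *
          ENNReal.ofReal ((1 - h ω) * (Z d P Γ s ω / Z d Q Γ s ω)) * ENNReal.ofReal (M u ω) *
          ENNReal.ofReal (Z d Q Γ u ω) ∂Γ := fun u htu => by
      rw [← lintegral_add_left]
      · refine lintegral_congr_ae ?_
        filter_upwards [hfork (hst.trans htu)] with ω hω
        rw [hω]
        ring
      · exact ((hgP.mono ((F d).le t) le_rfl).mul ((hmM u).mono ((F d).le u) le_rfl)).mul
          ((measurable_Z P Γ u).mono ((F d).le u) le_rfl).ennreal_ofReal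
    rw [split _ t.le_succ, split _ le_rfl]
    exact add_le_add (hMP.lintegral_mul_Z_succ_le hPΓ hgP) (hMQ.lintegral_mul_Z_succ_le hQΓ hgQ)
  · have hRP : ∀ u, u ≤ s → ∫⁻ ω, A.indicator (fun _ => 1) ω * ENNReal.ofReal (M u ω) *
          ENNReal.ofReal (Z d R Γ u ω) ∂Γ =
        ∫⁻ ω, A.indicator (fun _ => 1) ω * ENNReal.ofReal (M u ω) *
          ENNReal.ofReal (Z d P Γ u ω) ∂Γ := fun u hus => by
      refine lintegral_congr_ae ?_
      filter_upwards [hZ u] with ω hω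
      rw [hω, if_pos hus]
    rw [hRP _ (not_le.mp hst), hRP _ (not_le.mp hst).le]
    exact hMP.lintegral_mul_Z_succ_le hPΓ hg

/-- The supermartingale property is closed under local `L¹` convergence of density processes. -/
lemma TendstoLocL1.isNSM {Γ P : Measure (Seq d)} [IsProbabilityMeasure Γ]
    [IsProbabilityMeasure P] (hP : LocAC d P Γ) {Pn : ℕ → Measure (Seq d)}
    (hPn : ∀ n, IsProbabilityMeasure (Pn n) ∧ LocAC d (Pn n) Γ)
    (hlim : TendstoLocL1 d Γ Pn P) {M : ℕ → Seq d → ℝ} (hM : ∀ n, IsNSM d (Pn n) M) :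
    IsNSM d P M := by
  have h0 := (hM 0).1
  have hadp := (hM 0).2.1
  have hmM : ∀ u, Measurable[(F d) u] (M u) := fun u => (hadp u).measurable
  refine isNSM_of_setLIntegral_succ_le h0 hadp fun t A hA => ?_
  let B : ℕ → Set (Seq d) := fun k => A ∩ {ω | M t ω ≤ k}
  let f : ℕ → Seq d → ENNReal := fun k =>
    (B k ∩ {ω | M (t + 1) ω ≤ k}).indicator fun ω => ENNReal.ofReal (M (t + 1) ω)
  have hB : ∀ k, MeasurableSet[(F d) t] (B k) := fun k =>
    hA.inter (measurableSet_le (hmM t) measurable_const)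
  have hf : ∀ k, Measurable[(F d) (t + 1)] (f k) := fun k =>
    (hmM (t + 1)).ennreal_ofReal.indicator
      (((F d).mono t.le_succ _ (hB k)).inter (measurableSet_le (hmM (t + 1)) measurable_const))
  have hbound : ∀ k, ∫⁻ ω, f k ω ∂P ≤ ∫⁻ ω in A, ENNReal.ofReal (M t ω) ∂P := by
    intro k
    let v : Seq d → ENNReal := (B k).indicator fun ω => ENNReal.ofReal (M t ω)
    have hv : Measurable[(F d) t] v := (hmM t).ennreal_ofReal.indicator (hB k)
    have hvk : ∀ ω, v ω ≤ k := fun ω => by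
      refine Set.indicator_apply_le' (fun hω => ?_) fun _ => zero_le
      exact ENNReal.ofReal_le_of_le_toReal (by simpa using hω.2)
    have hfk : ∀ ω, f k ω ≤ k := fun ω => by
      refine Set.indicator_apply_le' (fun hω => ?_) fun _ => zero_le
      exact ENNReal.ofReal_le_of_le_toReal (by simpa using hω.2)
    have step : ∀ n, ∫⁻ ω, f k ω ∂(Pn n) ≤ ∫⁻ ω, v ω ∂(Pn n) := fun n => by
      have := (hPn n).1
      have hg : Measurable[(F d) t] ((B k).indicator fun _ => (1 : ENNReal)) :=
        measurable_const.indicator (hB k)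
      calc ∫⁻ ω, f k ω ∂(Pn n)
          ≤ ∫⁻ ω, (B k).indicator (fun _ => 1) ω * ENNReal.ofReal (M (t + 1) ω) ∂(Pn n) := by
            refine lintegral_mono fun ω => Set.indicator_apply_le' (fun hω => ?_) fun _ => zero_le
            simp [hω.1]
        _ ≤ ∫⁻ ω, (B k).indicator (fun _ => 1) ω * ENNReal.ofReal (M t ω) ∂(Pn n) :=
            (hM n).lintegral_mul_succ_le hg
        _ = ∫⁻ ω, v ω ∂(Pn n) := by
            refine lintegral_congr fun ω => ?_
            by_cases hω : ω ∈ B k <;> simp [v, hω]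
    have herr : ∀ u, Tendsto (fun n => (k : ENNReal) *
        ENNReal.ofReal (∫ ω, |Z d (Pn n) Γ u ω - Z d P Γ u ω| ∂Γ)) atTop (nhds 0) := fun u => by
      simpa using ENNReal.Tendsto.const_mul (ENNReal.tendsto_ofReal (hlim u))
        (Or.inr (ENNReal.natCast_ne_top k))
    have happrox : ∀ n, ∫⁻ ω, f k ω ∂P ≤ ∫⁻ ω, v ω ∂P +
        k * ENNReal.ofReal (∫ ω, |Z d (Pn n) Γ t ω - Z d P Γ t ω| ∂Γ) +
        k * ENNReal.ofReal (∫ ω, |Z d (Pn n) Γ (t + 1) ω - Z d P Γ (t + 1) ω| ∂Γ) := fun n => by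
      have := (hPn n).1
      have h1 := lintegral_le_lintegral_add_integral_abs_Z_sub hP (hPn n).2 (hf k) hfk
      have h2 := lintegral_le_lintegral_add_integral_abs_Z_sub (hPn n).2 hP hv hvk
      simp only [abs_sub_comm (Z d P Γ _ _)] at h1
      exact h1.trans (add_le_add_left ((step n).trans h2) _)
    have hle : ∫⁻ ω, f k ω ∂P ≤ ∫⁻ ω, v ω ∂P :=
      ge_of_tendsto' (by simpa using (tendsto_const_nhds.add (herr t)).add (herr (t + 1))) happrox
    refine hle.trans ?_
    rw [lintegral_indicator ((F d).le t _ (hB k))]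
    exact lintegral_mono_set Set.inter_subset_left
  have hliminf : ∀ ω, A.indicator (fun ω => ENNReal.ofReal (M (t + 1) ω)) ω =
      liminf (fun k => f k ω) atTop := fun ω => by
    refine (Tendsto.liminf_eq (tendsto_const_nhds.congr' ?_)).symm
    obtain ⟨N, hN⟩ := exists_nat_ge (max (M t ω) (M (t + 1) ω))
    filter_upwards [eventually_ge_atTop N] with k hk
    have hk' : max (M t ω) (M (t + 1) ω) ≤ k := hN.trans (Nat.cast_le.mpr hk)
    by_cases hω : ω ∈ A <;>
      simp [f, B, hω, (le_max_left _ _).trans hk', (le_max_right _ _).trans hk']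
  rw [← lintegral_indicator ((F d).le t A hA)]
  simp only [hliminf]
  refine (lintegral_liminf_le fun k => (hf k).mono ((F d).le _) le_rfl).trans ?_
  exact liminf_le_of_frequently_le' (Frequently.of_forall hbound)

/-- A nonnegative supermartingale for every law in `PP` is one for every law in the fork-convex
hull of `PP`. -/
lemma isNSM_of_mem_fconv {Γ : Measure (Seq d)} [IsProbabilityMeasure Γ]
    {PP : Set (Measure (Seq d))} (hPP : ∀ P ∈ PP, IsProbabilityMeasure P ∧ LocAC d P Γ)
    {M : ℕ → Seq d → ℝ} (hM : ∀ P ∈ PP, IsNSM d P M) {P : Measure (Seq d)}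
    (hP : P ∈ fconv d Γ PP) :
    (IsProbabilityMeasure P ∧ LocAC d P Γ) ∧ IsNSM d P M := by
  refine hP {P | (IsProbabilityMeasure P ∧ LocAC d P Γ) ∧ IsNSM d P M}
    ⟨fun Q hQ => ⟨hPP Q hQ, hM Q hQ⟩, ?_⟩
  intro P hP Q hQ s h R hR
  refine ⟨?_, hR.isNSM hP.2 hQ.2⟩
  obtain ⟨-, -, -, -, -, -, -, hR1, hR2, -⟩ := hR
  exact ⟨hR1, hR2⟩

variable (d)

/-- A process is an NSM for every law in `PP` iff it is an NSM for every
law in the closed fork-convex hull of `PP`. -/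
theorem statement2 (Γ : Measure (Seq d)) (hΓ : IsGamma d Γ)
    (PP : Set (Measure (Seq d))) (hPP : ∀ P ∈ PP, IsProbabilityMeasure P ∧ LocAC d P Γ)
    (M : ℕ → Seq d → ℝ) :
    (∀ P ∈ PP, IsNSM d P M) ↔ (∀ P ∈ clfconv d Γ PP, IsNSM d P M) := by
  have := hΓ.1
  constructor
  · rintro hM P ⟨hP, hPΓ, Pn, hPn, hlim⟩
    have hall := fun n => isNSM_of_mem_fconv hPP hM (hPn n)
    exact hlim.isNSM hPΓ (fun n => (hall n).1) fun n => (hall n).2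
  · intro hM P hP
    refine hM P ⟨(hPP P hP).1, (hPP P hP).2, fun _ => P, fun _ S hS => hS.1 hP, fun t => ?_⟩
    simp

end SeqTest
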